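/- Let s be the epistandard word directed by Δ = x1 x2 x3 ⋯ over a finite alphabet A, let m be the smallest positive integer such that Alph(x1⋯xm) = Alph(s), and set u_{n+1} = Pal(x1⋯xn) for all n ≥ 0. Then the set of all ultimate quasiperiods of any episturmian word t having the same set of factors as s is ⋃_{n≥m} Q_n, where Q_n = { q : q is a factor of u_{n+1} and |q| ≥ |u_{n+1}| − |u_{p_n}| } and p_n = sup{ i ≤ n : Alph(x_i ⋯ x_n) = Alph(x_i x_{i+1} x_{i+2} ⋯) }. -/

import Mathlib

/-!
The proof goes through Justin's formula `Pal(a v) = L_a(Pal(v)) a` (`Pal_eq_JP`). It follows from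
two facts about the words `P` defined by that recursion: `P(v)` is a palindrome, and its
palindromic prefixes are exactly the words `P(v')` with `v'` a prefix of `v` (`pal_prefix_JP`).
Consequently the epistandard word directed by `Δ = a Δ'` is the image under `L_a` of the one
directed by `Δ'` (`isPref_std_iff`), and for `v = x₁⋯x_n` it is `μ_v(w)` with `w` directed by
`x_{n+1} x_{n+2} ⋯`.

Since `t` is recurrent and has the factors of `s`, and `s` is recurrent (`std_recurrent`), `q` is
an ultimate quasiperiod of `t` iff every window of `|q|` consecutive positions of `s` contains the
start of an occurrence of `q` (`Dense`). The word `P(v)` occurs in `s = μ_v(w)` at the start of each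
block `μ_v(b)`, `b` a letter of `w` (`isPref_muL`), and `|μ_v(b)| = |P(v)| - |P(v₁)|` when
`v = v₁ b v₂` with `b` not in `v₂` (`muL_length_last`). By definition of `p_n`, the largest of these
block lengths, over the letters `b` of `x_{n+1} x_{n+2} ⋯`, is `|u_{n+1}| - |u_{p_n}|`. So a factor of
`u_{n+1} = P(v)` of at least that length is dense (`dense_of_long`). Conversely, take `q` dense and
the least `n` for which `q` is a factor of `u_{n+1}`. Desubstituting letter by letter shows that all
occurrences of `q` in `s` sit at one fixed offset from the block starts (`occ_unique`), so the
distance between consecutive occurrences attains every `|μ_v(b)|` and `q` must be at least that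
long (`long_of_dense`). A dense word contains all letters of `s`, which gives `m ≤ n`.
-/


namespace EpiQP

/-- `u` is a prefix of the infinite word `w`. -/
def IsPref {σ : Type*} (u : List σ) (w : ℕ → σ) : Prop :=
  ∀ (i : ℕ) (h : i < u.length), u.get ⟨i, h⟩ = w i

/-- The prefix of length `n` of the infinite word `w`. -/
def prefWord {σ : Type*} (w : ℕ → σ) (n : ℕ) : List σ :=
  List.ofFn (fun i : Fin n => w i)

/-- The finite word `u` occurs in the infinite word `w` at position `k`. -/
def OccursAt {σ : Type*} (u : List σ) (w : ℕ → σ) (k : ℕ) : Prop :=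
  ∀ (i : ℕ) (h : i < u.length), u.get ⟨i, h⟩ = w (k + i)

/-- `u` is a (finite) factor of the infinite word `w`. -/
def IsFactorInf {σ : Type*} (u : List σ) (w : ℕ → σ) : Prop :=
  ∃ k, OccursAt u w k

/-- An infinite word is recurrent if each of its factors occurs infinitely often in it. -/
def Recurrent {σ : Type*} (w : ℕ → σ) : Prop :=
  ∀ (u : List σ) (k : ℕ), OccursAt u w k → ∀ N, ∃ m, N ≤ m ∧ OccursAt u w m

/-- `u` is a quasiperiod of the infinite word `w`: `u` is non-empty and there is a
sequence of prefixes `p n ++ u` of `w` with `p 0 = ε` and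
`|p n| < |p (n+1)| ≤ |p n ++ u|`. -/
def IsQuasiperiod {A : Type*} (u : List A) (w : ℕ → A) : Prop :=
  u ≠ [] ∧ ∃ p : ℕ → List A, p 0 = [] ∧
    (∀ n, (p n).length < (p (n + 1)).length ∧
      (p (n + 1)).length ≤ (p n).length + u.length) ∧
    ∀ n, IsPref (p n ++ u) w

/-- An infinite word is quasiperiodic if it has a quasiperiod. -/
def Quasiperiodic {A : Type*} (w : ℕ → A) : Prop := ∃ u, IsQuasiperiod u w

/-- A set `X` of finite words covers the infinite word `w`. -/
def CoveredBy {A : Type*} (X : Set (List A)) (w : ℕ → A) : Prop :=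
  ∃ (p z : ℕ → List A), p 0 = [] ∧ (∀ n, z n ∈ X) ∧
    (∀ n, (p n).length < (p (n + 1)).length ∧
      (p (n + 1)).length ≤ (p n).length + (z n).length) ∧
    ∀ n, IsPref (p n ++ z n) w

/-- The morphism `L_a` : `a ↦ a`, `b ↦ ab` for `b ≠ a`. -/
def Lm {A : Type*} [DecidableEq A] (a : A) (u : List A) : List A :=
  u.flatMap (fun b => if b = a then [a] else [a, b])

/-- The morphism `R_a` : `a ↦ a`, `b ↦ ba` for `b ≠ a`. -/
def Rm {A : Type*} [DecidableEq A] (a : A) (u : List A) : List A :=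
  u.flatMap (fun b => if b = a then [a] else [b, a])

/-- The pure epistandard morphism `μ_v = L_{v_1} ∘ ⋯ ∘ L_{v_k}` for `v = v_1 ⋯ v_k`. -/
def muL {A : Type*} [DecidableEq A] (v : List A) (u : List A) : List A :=
  v.foldr Lm u

/-- The pure episturmian morphism `μ_{v̄} = R_{v_1} ∘ ⋯ ∘ R_{v_k}` for `v = v_1 ⋯ v_k`. -/
def muR {A : Type*} [DecidableEq A] (v : List A) (u : List A) : List A :=
  v.foldr Rm u

/-- Spinned letters are elements of `A × Bool`: `(a, false)` is the `L`-spinned letter `a`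
and `(a, true)` is the `R`-spinned letter `ā`.  `μ` on a spinned letter. -/
def muS {A : Type*} [DecidableEq A] (x : A × Bool) : List A → List A :=
  if x.2 then Rm x.1 else Lm x.1

/-- The pure episturmian morphism `μ_{w̆}` directed by the finite spinned word `w̆`. -/
def muW {A : Type*} [DecidableEq A] (w : List (A × Bool)) (u : List A) : List A :=
  w.foldr muS u

/-- `x` is the image of the infinite word `w` under the (letterwise) morphism whose
image on the letter `a` is `f a` (all images being non-empty). -/
def SubstOf {A : Type*} (f : A → List A) (w x : ℕ → A) : Prop :=
  ∀ n, IsPref ((prefWord w n).flatMap f) x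

/-- The spinned infinite word `Δ` directs the infinite word `t`: there is a sequence
`ts` of recurrent infinite words with `ts 0 = t` and `ts n = μ_{Δ n}(ts (n+1))`. -/
def Directs {A : Type*} [DecidableEq A] (Δ : ℕ → A × Bool) (t : ℕ → A) : Prop :=
  ∃ ts : ℕ → (ℕ → A), ts 0 = t ∧ (∀ n, Recurrent (ts n)) ∧
    ∀ n, SubstOf (fun a => muS (Δ n) [a]) (ts (n + 1)) (ts n)

/-- An infinite word is episturmian iff it is directed by some spinned infinite word. -/
def Episturmian {A : Type*} [DecidableEq A] (t : ℕ → A) : Prop :=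
  ∃ Δ : ℕ → A × Bool, Directs Δ t

/-- The palindromic right-closure `w⁽⁺⁾`: the shortest palindrome having `w` as a
prefix, obtained by appending the reverse of `w` deprived of its longest
palindromic suffix. -/
def palClosure {A : Type*} [DecidableEq A] (w : List A) : List A :=
  w ++ (w.take (w.length -
    Nat.findGreatest
      (fun k => (w.drop (w.length - k)).reverse = w.drop (w.length - k)) w.length)).reverse

/-- Iterated palindromic closure: `Pal ε = ε`, `Pal (w x) = (Pal w · x)⁽⁺⁾`. -/
def Pal {A : Type*} [DecidableEq A] (w : List A) : List A :=
  w.foldl (fun p x => palClosure (p ++ [x])) []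

/-- `s` is the epistandard word directed by `Δ`, i.e. `s = lim_n Pal(Δ_1 ⋯ Δ_n)`. -/
def IsEpistandardOf {A : Type*} [DecidableEq A] (Δ : ℕ → A) (s : ℕ → A) : Prop :=
  ∀ n, IsPref (Pal (prefWord Δ n)) s

/-- The concatenation of a finite word and an infinite word. -/
def catInf {σ : Type*} (u : List σ) (y : ℕ → σ) : ℕ → σ :=
  fun n => if h : n < u.length then u.get ⟨n, h⟩ else y (n - u.length)

/-- Prepending a letter to an infinite word. -/
def consInf {σ : Type*} (a : σ) (w : ℕ → σ) : ℕ → σ :=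
  fun n => match n with
  | 0 => a
  | Nat.succ k => w k

def UltimatelyPeriodic {A : Type*} (w : ℕ → A) : Prop :=
  ∃ p N : ℕ, 0 < p ∧ ∀ n, N ≤ n → w (n + p) = w n

/-- A factor `u` of `t` is right special if `ua`, `ub` are factors of `t` for two
distinct letters `a`, `b`. -/
def RightSpecial {A : Type*} (u : List A) (t : ℕ → A) : Prop :=
  ∃ a b : A, a ≠ b ∧ IsFactorInf (u ++ [a]) t ∧ IsFactorInf (u ++ [b]) t

/-- The combinatorial definition of episturmian words: the set of factors is closed
under reversal, and there is at most one right special factor of each length. -/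
def EpisturmianC {A : Type*} (t : ℕ → A) : Prop :=
  (∀ u : List A, IsFactorInf u t → IsFactorInf u.reverse t) ∧
  ∀ u v : List A, RightSpecial u t → RightSpecial v t → u.length = v.length → u = v

/-- The shifting factor `S_{w̆}` of `μ_{w̆}` (so that `μ_{w̆}(v) = S_{w̆}⁻¹ μ_w(v) S_{w̆}`):
`S_ε = ε`, `S_{a w̆} = L_a(S_{w̆})`, `S_{ā w̆} = L_a(S_{w̆}) a`. -/
def Sfac {A : Type*} [DecidableEq A] : List (A × Bool) → List A
  | [] => []
  | x :: v => if x.2 then Lm x.1 (Sfac v) ++ [x.1] else Lm x.1 (Sfac v)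

/-- A spinned infinite word is normalized if it contains infinitely many `L`-spinned
letters but no factor of the form `ā v̄ a` (`v̄` being `R`-spinned). -/
def NormalizedInf {A : Type*} (Δ : ℕ → A × Bool) : Prop :=
  (∀ N, ∃ n, N ≤ n ∧ (Δ n).2 = false) ∧
  ∀ (a : A) (i j : ℕ), i < j → Δ i = (a, true) →
    (∀ k, i < k → k < j → (Δ k).2 = true) → Δ j ≠ (a, false)

/-- A finite spinned word is normalized if it has no factor of the form `ā v̄ a`. -/
def NormalizedFin {A : Type*} (u : List (A × Bool)) : Prop :=
  ¬ ∃ (a : A) (w1 w2 : List (A × Bool)) (z : List A),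
      u = w1 ++ (a, true) :: (z.map (fun x => (x, true)) ++ (a, false) :: w2)

/-- Strict lexicographic order on infinite words induced by the order on letters. -/
def LexLt {A : Type*} [LinearOrder A] (x y : ℕ → A) : Prop :=
  ∃ n : ℕ, (∀ i, i < n → x i = y i) ∧ x n < y n

/-- An infinite word is an infinite Lyndon word if it is strictly lexicographically
smaller than each of its proper suffixes. -/
def InfLyndon {A : Type*} [LinearOrder A] (w : ℕ → A) : Prop :=
  ∀ i : ℕ, 0 < i → LexLt w (fun n => w (n + i))

/-- A return to `v` in `w`: the segment of `w` between two consecutive occurrences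
of `v`. -/
def IsReturn {σ : Type*} (v : List σ) (w : ℕ → σ) (r : List σ) : Prop :=
  ∃ k k' : ℕ, k < k' ∧ OccursAt v w k ∧ OccursAt v w k' ∧
    (∀ j, k < j → j < k' → ¬ OccursAt v w j) ∧
    r = List.ofFn (fun i : Fin (k' - k) => w (k + i))

/-- `u` is a quasiperiod of the finite word `z`: every position of `z` falls within
some occurrence of `u` in `z`. -/
def IsQuasiperiodFin {A : Type*} (u z : List A) : Prop :=
  u ≠ [] ∧ ∀ i, i < z.length → ∃ k, k ≤ i ∧ i < k + u.length ∧ u <+: z.drop k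

/-! ### The morphisms `L_a` and desubstitution -/

section Morphism

variable {A : Type*} [DecidableEq A]

theorem Lm_nil (a : A) : Lm a [] = [] := rfl

theorem Lm_cons_self (a : A) (z : List A) : Lm a (a :: z) = a :: Lm a z := by
  simp [Lm]

theorem Lm_cons_ne {a c : A} (h : c ≠ a) (z : List A) :
    Lm a (c :: z) = a :: c :: Lm a z := by
  simp [Lm, h]

theorem Lm_append (a : A) (y z : List A) : Lm a (y ++ z) = Lm a y ++ Lm a z := by
  simp [Lm]

theorem Lm_length_le (a : A) (z : List A) : z.length ≤ (Lm a z).length := by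
  induction z with
  | nil => simp
  | cons c z ih =>
    by_cases h : c = a
    · subst h; simp [Lm_cons_self, ih]
    · simp [Lm_cons_ne h]; omega

theorem Lm_mem {a c : A} {z : List A} (h : c ∈ Lm a z) : c = a ∨ c ∈ z := by
  induction z with
  | nil => simp [Lm] at h
  | cons d z ih =>
    by_cases hd : d = a
    · subst hd
      rw [Lm_cons_self] at h
      rcases List.mem_cons.1 h with h | h
      · exact Or.inl h
      · rcases ih h with h | h
        · exact Or.inl h
        · exact Or.inr (List.mem_cons_of_mem _ h)
    · rw [Lm_cons_ne hd] at h
      simp only [List.mem_cons] at h ⊢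
      rcases h with h | h | h
      · exact Or.inl h
      · exact Or.inr (Or.inl h)
      · rcases ih h with h | h
        · exact Or.inl h
        · exact Or.inr (Or.inr h)

theorem mem_Lm {a c : A} {z : List A} (h : c ∈ z) : c ∈ Lm a z := by
  simp only [Lm, List.mem_flatMap]
  exact ⟨c, h, by by_cases hc : c = a <;> simp [hc]⟩

theorem muL_nil (v : List A) : muL v ([] : List A) = [] := by
  induction v with
  | nil => rfl
  | cons a v ih => change Lm a (muL v []) = []; rw [ih]; rfl

theorem muL_cons (a : A) (v u : List A) : muL (a :: v) u = Lm a (muL v u) := rfl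

theorem muL_append (v y z : List A) : muL v (y ++ z) = muL v y ++ muL v z := by
  induction v with
  | nil => rfl
  | cons a v ih => simp only [muL_cons, ih, Lm_append]

theorem muL_comp (v w z : List A) : muL (v ++ w) z = muL v (muL w z) := by
  simp [muL]

theorem muL_length_le (v z : List A) : z.length ≤ (muL v z).length := by
  induction v with
  | nil => exact le_rfl
  | cons a v ih => exact ih.trans (Lm_length_le a _)

/-- A word `L_a(z) a` always starts with `a`. -/
theorem Lm_head (a : A) (z : List A) : ∃ r, Lm a z ++ [a] = a :: r := by
  cases z with
  | nil => exact ⟨[], rfl⟩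
  | cons c z =>
    by_cases h : c = a
    · subst h; exact ⟨Lm c z ++ [c], by rw [Lm_cons_self]; rfl⟩
    · exact ⟨c :: (Lm a z ++ [a]), by rw [Lm_cons_ne h]; rfl⟩

theorem Lm_prefix_mono (a : A) {y z : List A} (h : y <+: z) :
    Lm a y ++ [a] <+: Lm a z ++ [a] := by
  obtain ⟨r, rfl⟩ := h
  obtain ⟨r', hr'⟩ := Lm_head a r
  rw [Lm_append, List.append_assoc, hr']
  exact ⟨r', by simp⟩

/-- A prefix of `L_a(z) a` is the image of a prefix of `z`, possibly followed by the first letter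
`a` of the next image. -/
theorem Lm_prefix_cases {a : A} {z X : List A} (h : X <+: Lm a z ++ [a]) :
    ∃ y, y <+: z ∧ (X = Lm a y ∨ X = Lm a y ++ [a]) := by
  induction z generalizing X with
  | nil =>
    refine ⟨[], List.prefix_rfl, ?_⟩
    rcases X with _ | ⟨b, X⟩
    · exact Or.inl rfl
    · right
      simp only [Lm_nil, List.nil_append, List.cons_prefix_cons, List.prefix_nil] at h
      simp [h.1, h.2, Lm_nil]
  | cons c z ih =>
    rcases X with _ | ⟨b, X⟩
    · exact ⟨[], List.nil_prefix, Or.inl rfl⟩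
    by_cases hc : c = a
    · subst hc
      rw [Lm_cons_self, List.cons_append, List.cons_prefix_cons] at h
      obtain ⟨rfl, h⟩ := h
      obtain ⟨y, hy, hX⟩ := ih h
      refine ⟨b :: y, List.cons_prefix_cons.2 ⟨rfl, hy⟩, ?_⟩
      rw [Lm_cons_self]
      rcases hX with rfl | rfl
      · exact Or.inl rfl
      · exact Or.inr rfl
    · rw [Lm_cons_ne hc, List.cons_append, List.cons_prefix_cons] at h
      obtain ⟨rfl, h⟩ := h
      rcases X with _ | ⟨d, X⟩
      · exact ⟨[], List.nil_prefix, Or.inr rfl⟩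
      rw [List.cons_append, List.cons_prefix_cons] at h
      obtain ⟨rfl, h⟩ := h
      obtain ⟨y, hy, hX⟩ := ih h
      refine ⟨d :: y, List.cons_prefix_cons.2 ⟨rfl, hy⟩, ?_⟩
      rw [Lm_cons_ne hc]
      rcases hX with rfl | rfl
      · exact Or.inl rfl
      · exact Or.inr rfl

/-- The final `a` is needed: it marks that the image of the last letter of `x` is complete. -/
theorem Lm_cancel {a : A} {x z : List A} (h : Lm a x ++ [a] <+: Lm a z ++ [a]) :
    x <+: z := by
  induction x generalizing z with
  | nil => exact List.nil_prefix
  | cons c x ih =>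
    obtain ⟨rx, hrx⟩ := Lm_head a x
    rcases z with _ | ⟨d, z⟩
    · have h1 := h.length_le
      have h2 := Lm_length_le a (c :: x)
      simp only [Lm_nil, List.length_append, List.length_nil, List.length_cons] at h1 h2
      omega
    obtain ⟨rz, hrz⟩ := Lm_head a z
    by_cases hc : c = a <;> by_cases hd : d = a
    · subst hc; subst hd
      simp only [Lm_cons_self, List.cons_append, List.cons_prefix_cons, true_and] at h
      exact List.cons_prefix_cons.2 ⟨rfl, ih h⟩
    · subst hc
      simp only [Lm_cons_self, Lm_cons_ne hd, List.cons_append, List.cons_prefix_cons, true_and,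
        hrx] at h
      exact absurd h.1.symm hd
    · subst hd
      simp only [Lm_cons_self, Lm_cons_ne hc, List.cons_append, List.cons_prefix_cons, true_and,
        hrz] at h
      exact absurd h.1 hc
    · simp only [Lm_cons_ne hd, Lm_cons_ne hc, List.cons_append, List.cons_prefix_cons,
        true_and] at h
      exact List.cons_prefix_cons.2 ⟨h.1, ih h.2⟩

theorem Lm_injective (a : A) {x y : List A} (h : Lm a x = Lm a y) : x = y := by
  have h1 : x <+: y := Lm_cancel (a := a) (by rw [h])
  have h2 : y <+: x := Lm_cancel (a := a) (by rw [h])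
  exact h1.eq_of_length (le_antisymm h1.length_le h2.length_le)

/-- In `L_a(z) a`, every occurrence of `a` starts the image of a letter or is the last letter. -/
theorem Lm_prefix_self {a : A} {z X : List A} (h : X ++ [a] <+: Lm a z ++ [a]) :
    ∃ y, y <+: z ∧ X = Lm a y := by
  obtain ⟨y, hy, hX | hX⟩ := Lm_prefix_cases h
  · rcases List.eq_nil_or_concat y with rfl | ⟨y0, d, rfl⟩
    · simp [Lm_nil] at hX
    rw [List.concat_eq_append] at hX hy
    refine ⟨y0, (List.prefix_append _ _).trans hy, ?_⟩
    rw [Lm_append] at hX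
    by_cases hd : d = a
    · subst hd
      rw [Lm_cons_self, Lm_nil] at hX
      exact List.append_cancel_right hX
    · rw [Lm_cons_ne hd, Lm_nil] at hX
      have : X ++ [a] = (Lm a y0 ++ [a]) ++ [d] := by simpa using hX
      have h2 := List.append_inj' this rfl
      simp at h2
      exact absurd h2.2.symm hd
  · exact ⟨y, hy, List.append_cancel_right hX⟩

/-- In `L_a(z) a`, every letter other than `a` lies between two occurrences of `a`. -/
theorem Lm_prefix_ne {a c : A} (hc : c ≠ a) {z X : List A} (h : X ++ [c] <+: Lm a z ++ [a]) :
    (∃ y, X = y ++ [a]) ∧ X ++ [c] ++ [a] <+: Lm a z ++ [a] := by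
  obtain ⟨y, hy, hX | hX⟩ := Lm_prefix_cases h
  · refine ⟨?_, by rw [hX]; exact Lm_prefix_mono a hy⟩
    rcases List.eq_nil_or_concat y with rfl | ⟨y0, d, rfl⟩
    · simp [Lm_nil] at hX
    rw [List.concat_eq_append, Lm_append] at hX
    by_cases hd : d = a
    · subst hd
      rw [Lm_cons_self, Lm_nil] at hX
      have h2 := List.append_inj' hX rfl
      simp at h2
      exact absurd h2.2 hc
    · rw [Lm_cons_ne hd, Lm_nil] at hX
      have : X ++ [c] = (Lm a y0 ++ [a]) ++ [d] := by simpa using hX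
      exact ⟨_, (List.append_inj' this rfl).1⟩
  · have h2 := List.append_inj' hX rfl
    simp at h2
    exact absurd h2.2 hc

/-- An occurrence in `L_a(z) a` of a word starting and ending with `a` is the image of an
occurrence in `z`. -/
theorem Lm_desub {a : A} {x w z : List A} (h : x ++ w <+: Lm a z ++ [a])
    (h1 : ∃ r, w = a :: r) (h2 : ∃ r, w = r ++ [a]) :
    ∃ x' q', x = Lm a x' ∧ w = Lm a q' ++ [a] ∧ x' ++ q' <+: z := by
  obtain ⟨r, hr⟩ := h1
  obtain ⟨e, he⟩ := h2
  have hx : x ++ [a] <+: Lm a z ++ [a] := by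
    refine List.IsPrefix.trans ⟨r, ?_⟩ h
    rw [hr]; simp
  obtain ⟨x', -, rfl⟩ := Lm_prefix_self hx
  have hy : (Lm a x' ++ e) ++ [a] <+: Lm a z ++ [a] := by
    rw [List.append_assoc, ← he]; exact h
  obtain ⟨y, hy, hY⟩ := Lm_prefix_self hy
  have : x' <+: y := by
    refine Lm_cancel (a := a) ⟨r, ?_⟩
    rw [← hY, List.append_assoc, List.append_assoc, ← he, hr]; rfl
  obtain ⟨q', rfl⟩ := this
  refine ⟨x', q', rfl, ?_, hy⟩
  rw [Lm_append] at hY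
  rw [he, List.append_cancel_left hY]

/-- A nonempty factor `q` of words of the form `L_a(z) a` always extends, on both sides, to
a word starting and ending with `a`; the extension depends on `q` only. -/
theorem Lm_extend (a : A) {q : List A} (hq : q ≠ []) :
    ∃ e₁ e₂ : List A, (∃ r, e₁ ++ q ++ e₂ = a :: r) ∧ (∃ r, e₁ ++ q ++ e₂ = r ++ [a]) ∧
      ∀ x z, x ++ q <+: Lm a z ++ [a] →
        ∃ y, x = y ++ e₁ ∧ y ++ (e₁ ++ q ++ e₂) <+: Lm a z ++ [a] := by
  have key1 : ∃ e₁ : List A, (∃ r, e₁ ++ q = a :: r) ∧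
      ∀ x z, x ++ q <+: Lm a z ++ [a] → ∃ y, x = y ++ e₁ := by
    rcases q with _ | ⟨c, q⟩
    · exact absurd rfl hq
    by_cases hc : c = a
    · exact ⟨[], ⟨q, by simp [hc]⟩, fun x z _ => ⟨x, by simp⟩⟩
    · refine ⟨[a], ⟨c :: q, rfl⟩, fun x z h => ?_⟩
      have : x ++ [c] <+: Lm a z ++ [a] := List.IsPrefix.trans ⟨q, by simp⟩ h
      exact (Lm_prefix_ne hc this).1
  have key2 : ∃ e₂ : List A, (∃ r, q ++ e₂ = r ++ [a]) ∧
      ∀ x z, x ++ q <+: Lm a z ++ [a] → x ++ q ++ e₂ <+: Lm a z ++ [a] := by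
    rcases List.eq_nil_or_concat q with rfl | ⟨q, c, rfl⟩
    · exact absurd rfl hq
    simp only [List.concat_eq_append]
    by_cases hc : c = a
    · exact ⟨[], ⟨q, by simp [hc]⟩, fun x z h => by simpa using h⟩
    · refine ⟨[a], ⟨q ++ [c], rfl⟩, fun x z h => ?_⟩
      rw [← List.append_assoc] at h ⊢
      exact (Lm_prefix_ne hc h).2
  obtain ⟨e₁, ⟨r₁, hr₁⟩, he₁⟩ := key1
  obtain ⟨e₂, ⟨r₂, hr₂⟩, he₂⟩ := key2
  refine ⟨e₁, e₂, ⟨r₁ ++ e₂, by rw [hr₁]; rfl⟩, ⟨e₁ ++ r₂, by simp [hr₂]⟩, fun x z h => ?_⟩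
  obtain ⟨y, rfl⟩ := he₁ x z h
  exact ⟨y, rfl, by simpa using he₂ _ z h⟩

end Morphism

/-! ### Justin's formula for iterated palindromic closures -/

section Justin

variable {A : Type*} [DecidableEq A]

/-- The words given by Justin's recursion `P(ε) = ε`, `P(a v) = L_a(P(v)) a`. They agree with the
iterated palindromic closures, see `Pal_eq_JP`. -/
def JP : List A → List A
  | [] => []
  | a :: v => Lm a (JP v) ++ [a]

theorem JP_cons (a : A) (v : List A) : JP (a :: v) = Lm a (JP v) ++ [a] := rfl

theorem JP_length_le (v : List A) : v.length ≤ (JP v).length := by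
  induction v with
  | nil => simp
  | cons a v ih =>
    have := Lm_length_le a (JP v)
    simp [JP_cons]; omega

theorem JP_append (v w : List A) : JP (v ++ w) = muL v (JP w) ++ JP v := by
  induction v with
  | nil => simp [muL, JP]
  | cons a v ih => simp [JP_cons, ih, muL_cons, Lm_append]

theorem mem_JP {c : A} {v : List A} : c ∈ JP v ↔ c ∈ v := by
  induction v with
  | nil => simp [JP]
  | cons a v ih =>
    simp only [JP_cons, List.mem_append, List.mem_cons, List.not_mem_nil, or_false]
    constructor
    · rintro (h | h)
      · rcases Lm_mem h with h | h
        · exact Or.inl h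
        · exact Or.inr (ih.1 h)
      · exact Or.inl h
    · rintro (h | h)
      · exact Or.inr h
      · exact Or.inl (mem_Lm (ih.2 h))

theorem JP_snoc_prefix (v : List A) (x : A) : JP v ++ [x] <+: JP (v ++ [x]) := by
  induction v with
  | nil => simp [JP, Lm_nil]
  | cons a v ih =>
    rw [List.cons_append, JP_cons, JP_cons]
    have h := Lm_prefix_mono a ih
    rw [Lm_append] at h
    refine List.IsPrefix.trans ?_ h
    by_cases hx : x = a
    · subst hx; simp [Lm_cons_self, Lm_nil]
    · rw [Lm_cons_ne hx, Lm_nil]; exact ⟨[a], by simp⟩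

theorem JP_prefix {v w : List A} (h : v <+: w) : JP v <+: JP w := by
  obtain ⟨r, rfl⟩ := h
  induction r using List.reverseRecOn with
  | nil => simp
  | append_singleton r x ih =>
    rw [← List.append_assoc]
    exact ih.trans ((List.prefix_append _ _).trans (JP_snoc_prefix _ x))

theorem Lm_reverse (a : A) (z : List A) : (Lm a z ++ [a]).reverse = Lm a z.reverse ++ [a] := by
  induction z with
  | nil => rfl
  | cons c z ih =>
    simp only [List.reverse_append, List.reverse_cons, List.reverse_nil, List.nil_append,
      List.cons_append] at ih
    by_cases hc : c = a
    · subst hc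
      simp only [Lm_cons_self, List.reverse_append, List.reverse_cons, Lm_append, Lm_nil,
        List.reverse_nil, List.nil_append, List.cons_append]
      rw [← List.cons_append, ih]
    · simp only [Lm_cons_ne hc, List.reverse_append, List.reverse_cons, Lm_append, Lm_nil,
        List.reverse_nil, List.nil_append, List.cons_append]
      rw [← List.cons_append, ← List.cons_append, ih]
      simp

theorem JP_reverse (v : List A) : (JP v).reverse = JP v := by
  induction v with
  | nil => rfl
  | cons a v ih => rw [JP_cons, Lm_reverse, ih]

/-- The palindromic prefixes of `P(v)` are the words `P(v')` with `v'` a prefix of `v`. -/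
theorem pal_prefix_JP {v Q : List A} (hp : Q.reverse = Q) (hQ : Q <+: JP v) :
    ∃ v', v' <+: v ∧ Q = JP v' := by
  induction v generalizing Q with
  | nil => exact ⟨[], List.nil_prefix, List.prefix_nil.1 hQ⟩
  | cons a v ih =>
    rcases Q with _ | ⟨b, Q⟩
    · exact ⟨[], List.nil_prefix, rfl⟩
    rw [JP_cons] at hQ
    obtain ⟨r, hr⟩ := Lm_head a (JP v)
    have hb : b = a := by
      rw [hr, List.cons_prefix_cons] at hQ
      exact hQ.1
    subst hb
    have hend : b :: Q = Q.reverse ++ [b] := by rw [← hp]; simp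
    rw [hend] at hQ
    obtain ⟨y, hy, hY⟩ := Lm_prefix_self hQ
    have hyr : y.reverse = y := by
      have h1 := Lm_reverse b y
      rw [← hY, ← hend, hp, hend, hY] at h1
      exact (Lm_injective b (List.append_cancel_right h1)).symm
    obtain ⟨v', hv', rfl⟩ := ih hyr hy
    exact ⟨b :: v', List.cons_prefix_cons.2 ⟨rfl, hv'⟩, by rw [hend, hY, JP_cons]⟩

theorem muL_singleton_of_not_mem {v : List A} {b : A} (h : b ∉ v) : muL v [b] = JP v ++ [b] := by
  induction v with
  | nil => rfl
  | cons a v ih =>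
    simp only [List.mem_cons, not_or] at h
    rw [muL_cons, ih h.2, Lm_append, Lm_cons_ne h.1, Lm_nil, JP_cons]
    simp

/-- If `v = v₁ b v₂` is split at the last occurrence of `b`, then `|μ_v(b)| = |P(v)| - |P(v₁)|`: indeed
`μ_v(b) = μ_{v₁}(P(b v₂))` and `P(v₁ w) = μ_{v₁}(P(w)) P(v₁)`. -/
theorem muL_length_last {v₁ v₂ : List A} {b : A} (h : b ∉ v₂) :
    (muL (v₁ ++ b :: v₂) [b]).length + (JP v₁).length = (JP (v₁ ++ b :: v₂)).length := by
  rw [JP_append, muL_comp, muL_cons, muL_singleton_of_not_mem h, Lm_append, Lm_cons_self, Lm_nil,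
    ← JP_cons, List.length_append]

theorem exists_last {v : List A} {b : A} (h : b ∈ v) : ∃ v₁ v₂, v = v₁ ++ b :: v₂ ∧ b ∉ v₂ := by
  induction v with
  | nil => simp at h
  | cons a v ih =>
    by_cases hb : b ∈ v
    · obtain ⟨v₁, v₂, rfl, h2⟩ := ih hb
      exact ⟨a :: v₁, v₂, rfl, h2⟩
    · rcases List.mem_cons.1 h with rfl | h
      · exact ⟨[], v, rfl, hb⟩
      · exact absurd h hb

/-- A palindromic suffix `y` of `P(v) x` satisfies `|y| ≤ 2 |P(v) x| - |P(v x)|`. Equality is attained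
by the suffix used in the palindromic closure, see `JP_snoc`. -/
theorem pal_suffix_le {v y : List A} {x : A} (hp : y.reverse = y) (hy : y <:+ JP v ++ [x]) :
    y.length + (JP (v ++ [x])).length ≤ 2 * ((JP v).length + 1) := by
  rw [JP_append, List.length_append]
  have hJx : (JP [x] : List A) = [x] := rfl
  rw [hJx]
  have hle : ∀ b ∈ v, (muL v [b]).length ≤ (JP v).length := by
    intro b hb
    obtain ⟨v₁, v₂, rfl, h2⟩ := exists_last hb
    have := muL_length_last (v₁ := v₁) h2
    omega
  have hle' : (muL v [x]).length ≤ (JP v).length + 1 := by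
    by_cases hx : x ∈ v
    · exact (hle x hx).trans (Nat.le_succ _)
    · rw [muL_singleton_of_not_mem hx]; simp
  rcases Nat.lt_or_ge y.length 2 with hlt | hge
  · by_cases hx : x ∈ v
    · have := hle x hx
      omega
    · omega
  -- here `y = x Q x` with `Q` a palindrome and `Q x` a prefix of `P(v)`
  have hpre : y <+: x :: JP v := by
    have := List.reverse_prefix.2 hy
    rw [hp] at this
    simpa [JP_reverse] using this
  rcases y with _ | ⟨b, y⟩
  · simp at hge
  rw [List.cons_prefix_cons] at hpre
  obtain ⟨rfl, hpre⟩ := hpre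
  rcases List.eq_nil_or_concat y with rfl | ⟨Q, c, rfl⟩
  · simp at hge
  rw [List.concat_eq_append] at hpre hp ⊢
  have hQ : Q.reverse = Q ∧ c = b := by
    simp only [List.reverse_cons, List.reverse_append, List.reverse_nil, List.nil_append,
      List.cons_append, List.cons.injEq] at hp
    obtain ⟨rfl, h⟩ := hp
    exact ⟨List.append_cancel_right h, rfl⟩
  obtain ⟨hQ, rfl⟩ := hQ
  obtain ⟨v', hv', rfl⟩ := pal_prefix_JP hQ ((List.prefix_append _ _).trans hpre)
  obtain ⟨r, rfl⟩ := hv'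
  rcases r with _ | ⟨d, r⟩
  · have := hpre.length_le
    simp at this
  have hd : JP v' ++ [d] <+: JP (v' ++ d :: r) := by
    refine (JP_snoc_prefix v' d).trans (JP_prefix ⟨r, by simp⟩)
  have hdc : c = d := by
    have := List.prefix_of_prefix_length_le hpre hd (by simp)
    have := this.eq_of_length (by simp)
    simpa using this
  subst hdc
  -- `v'` is followed by `x` in `v`, so it stops no later than the last occurrence of `x`
  obtain ⟨v₁, v₂, hv, h2⟩ := exists_last (v := v' ++ c :: r) (b := c) (by simp)
  have hvv : v' <+: v₁ := by
    refine List.prefix_of_prefix_length_le (l₃ := v' ++ c :: r) (List.prefix_append _ _)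
      (by rw [hv]; exact List.prefix_append _ _) ?_
    by_contra hlt
    push Not at hlt
    have h3 := List.append_eq_append_iff.1 hv
    rcases h3 with ⟨s, hs, hs'⟩ | ⟨s, hs, hs'⟩
    · rw [hs] at hlt; simp at hlt
    · rcases s with _ | ⟨e, s⟩
      · simp at hs; rw [hs] at hlt; omega
      · simp only [List.cons_append, List.cons.injEq] at hs'
        apply h2; rw [hs'.2]; simp
  have h3 := (JP_prefix hvv).length_le
  have h4 := muL_length_last (v₁ := v₁) h2
  rw [← hv] at h4
  simp only [List.length_cons, List.length_append, List.length_nil]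
  omega

/-- The step of the iterated palindromic closure holds for `P`. -/
theorem JP_snoc (v : List A) (x : A) : JP (v ++ [x]) = palClosure (JP v ++ [x]) := by
  obtain ⟨r, hr⟩ := JP_snoc_prefix v x
  have hlow := pal_suffix_le (v := v) (x := x) (y := []) rfl List.nil_suffix
  have hpal := JP_reverse (v ++ [x])
  have hbd : ∀ k, k ≤ (JP v ++ [x]).length →
      ((JP v ++ [x]).drop ((JP v ++ [x]).length - k)).reverse
        = (JP v ++ [x]).drop ((JP v ++ [x]).length - k) →
      k + (JP (v ++ [x])).length ≤ 2 * (JP v ++ [x]).length := by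
    intro k hk hkp
    have := pal_suffix_le (v := v) (x := x) hkp (List.drop_suffix _ _)
    simp only [List.length_drop, List.length_append, List.length_cons, List.length_nil] at this hk ⊢
    omega
  rw [← hr] at hlow hpal hbd ⊢
  have hwl : (JP v ++ [x]).length = (JP v).length + 1 := by simp
  rw [← hwl] at hlow
  generalize JP v ++ [x] = w at *
  simp only [List.length_append, List.length_nil] at hlow hbd
  have hrl : r.length ≤ w.length := by omega
  -- `w = rᴿ y` with `y` a palindrome
  have hw : r.reverse <+: w := by
    have h1 : r.reverse <+: w ++ r := by
      rw [← hpal, List.reverse_append]; exact List.prefix_append _ _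
    exact List.prefix_of_prefix_length_le h1 (List.prefix_append _ _) (by simpa using hrl)
  obtain ⟨y, hy⟩ := hw
  have hyp : y.reverse = y := by
    rw [← hy] at hpal
    simp only [List.reverse_append, List.reverse_reverse, List.append_assoc] at hpal
    exact List.append_cancel_right (List.append_cancel_left hpal)
  have hyl : r.length + y.length = w.length := by rw [← hy]; simp
  unfold palClosure
  have hk : Nat.findGreatest
      (fun k => (w.drop (w.length - k)).reverse = w.drop (w.length - k)) w.length = y.length := by
    rw [Nat.findGreatest_eq_iff]
    have hdrop : w.drop (w.length - y.length) = y := by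
      have h1 : w.length - y.length = r.reverse.length := by simp; omega
      rw [h1]; conv_lhs => rw [← hy]
      simp
    refine ⟨by omega, fun _ => by rw [hdrop, hyp], fun n hn hnw hP => ?_⟩
    have := hbd n hnw hP
    omega
  rw [hk]
  have h1 : w.length - y.length = r.reverse.length := by simp; omega
  have h2 : w.take (w.length - y.length) = r.reverse := by
    rw [h1]; conv_lhs => rw [← hy]
    simp
  rw [h2, List.reverse_reverse]

/-- Justin's formula: `Pal(a v) = L_a(Pal(v)) a`. -/
theorem Pal_eq_JP (v : List A) : Pal v = JP v := by
  induction v using List.reverseRecOn with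
  | nil => rfl
  | append_singleton v x ih =>
    rw [JP_snoc, ← ih]
    simp [Pal]

end Justin

/-! ### Infinite words and their prefixes; the epistandard word -/

section Infinite

variable {A : Type*}

theorem prefWord_length (w : ℕ → A) (n : ℕ) : (prefWord w n).length = n := by simp [prefWord]

theorem prefWord_succ (w : ℕ → A) (n : ℕ) : prefWord w (n + 1) = prefWord w n ++ [w n] := by
  unfold prefWord
  rw [List.ofFn_succ', List.concat_eq_append]
  simp

theorem prefWord_succ_left (w : ℕ → A) (n : ℕ) :
    prefWord w (n + 1) = w 0 :: prefWord (fun i => w (i + 1)) n := by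
  simp [prefWord, List.ofFn_succ]

theorem isPref_prefWord (w : ℕ → A) (n : ℕ) : IsPref (prefWord w n) w := by
  intro i h
  simp [prefWord]

theorem isPref_iff {u : List A} {w : ℕ → A} : IsPref u w ↔ u = prefWord w u.length := by
  constructor
  · intro h
    refine List.ext_get (by simp [prefWord]) fun i h1 h2 => ?_
    rw [h i h1]; simp [prefWord]
  · intro h; rw [h]; exact isPref_prefWord _ _

theorem IsPref.of_prefix {u v : List A} {w : ℕ → A} (h : u <+: v) (hv : IsPref v w) :
    IsPref u w := by
  obtain ⟨r, rfl⟩ := h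
  intro i hi
  have := hv i (by simp; omega)
  simpa [List.getElem_append_left hi] using this

theorem prefWord_mono (w : ℕ → A) {n k : ℕ} (h : n ≤ k) : prefWord w n <+: prefWord w k := by
  induction k, h using Nat.le_induction with
  | base => exact List.prefix_rfl
  | succ k _ ih => rw [prefWord_succ]; exact ih.trans (List.prefix_append _ _)

theorem IsPref.prefix_of_le {u v : List A} {w : ℕ → A} (hu : IsPref u w) (hv : IsPref v w)
    (h : u.length ≤ v.length) : u <+: v := by
  rw [isPref_iff] at hu hv
  rw [hu, hv]
  exact prefWord_mono w h

theorem mem_prefWord {w : ℕ → A} {n : ℕ} {c : A} : c ∈ prefWord w n ↔ ∃ i, i < n ∧ w i = c := by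
  simp [prefWord, List.mem_ofFn, Fin.exists_iff]

theorem prefWord_take (w : ℕ → A) {k n : ℕ} (h : k ≤ n) :
    (prefWord w n).take k = prefWord w k := by
  have := List.prefix_iff_eq_take.1 (prefWord_mono w h)
  rw [prefWord_length] at this
  exact this.symm

theorem mem_prefWord_drop {w : ℕ → A} {n k : ℕ} {c : A} :
    c ∈ (prefWord w n).drop k ↔ ∃ i, k ≤ i ∧ i < n ∧ w i = c := by
  rw [List.mem_iff_getElem]
  simp only [List.length_drop, prefWord_length, List.getElem_drop]
  constructor
  · rintro ⟨i, hi, h⟩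
    exact ⟨k + i, by omega, by omega, by simpa [prefWord] using h⟩
  · rintro ⟨i, h1, h2, h⟩
    refine ⟨i - k, by omega, ?_⟩
    have : k + (i - k) = i := by omega
    simpa [prefWord, this] using h

theorem occursAt_iff {u : List A} {w : ℕ → A} {k : ℕ} :
    OccursAt u w k ↔ IsPref (prefWord w k ++ u) w := by
  constructor
  · intro h i hi
    by_cases hik : i < k
    · have : i < (prefWord w k).length := by rwa [prefWord_length]
      rw [List.get_eq_getElem, List.getElem_append_left this]
      simp [prefWord]
    · have h1 : (prefWord w k).length ≤ i := by rw [prefWord_length]; omega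
      simp only [List.length_append, prefWord_length] at hi
      have h2 := h (i - k) (by omega)
      have h3 : k + (i - k) = i := by omega
      rw [h3] at h2
      simpa [List.getElem_append_right h1, prefWord_length] using h2
  · intro h i hi
    have := h (k + i) (by simp [prefWord_length]; omega)
    have h1 : (prefWord w k).length ≤ k + i := by rw [prefWord_length]; omega
    simpa [List.getElem_append_right h1, prefWord_length] using this

theorem occursAt_of_isPref {x u : List A} {w : ℕ → A} (h : IsPref (x ++ u) w) :
    OccursAt u w x.length := by
  rw [occursAt_iff]
  have : IsPref x w := h.of_prefix (List.prefix_append _ _)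
  rw [← isPref_iff.1 this]
  exact h

theorem occursAt_append {x u v : List A} {w : ℕ → A} {k : ℕ} (h : OccursAt (x ++ u ++ v) w k) :
    OccursAt u w (k + x.length) := by
  rw [occursAt_iff] at h
  have : IsPref ((prefWord w k ++ x) ++ u) w := h.of_prefix ⟨v, by simp⟩
  simpa [prefWord_length] using occursAt_of_isPref this

/-- The word of length `n` at position `k`. -/
theorem occursAt_window (w : ℕ → A) (k n : ℕ) : OccursAt (prefWord (fun i => w (k + i)) n) w k := by
  intro i hi
  simp [prefWord]

/-- If the window of length `n` of `w` at position `k` occurs in `w'` at position `k'`, an occurrence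
of `u` inside the latter yields one inside the former. -/
theorem occursAt_sub {w w' : ℕ → A} {u : List A} {k k' n j : ℕ}
    (h : OccursAt (prefWord (fun i => w (k + i)) n) w' k') (hj : j + u.length ≤ n)
    (hu : OccursAt u w' (k' + j)) : OccursAt u w (k + j) := by
  intro i hi
  rw [hu i hi]
  have := h (j + i) (by rw [prefWord_length]; omega)
  simp only [prefWord, List.get_eq_getElem, List.getElem_ofFn] at this
  rw [add_assoc, ← this, add_assoc]

variable [DecidableEq A]

/-- The epistandard word directed by `Δ`, read off from Justin's recursion. -/
def std (Δ : ℕ → A) (i : ℕ) : A :=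
  (JP (prefWord Δ (i + 1)))[i]'(by
    have := JP_length_le (prefWord Δ (i + 1))
    rw [prefWord_length] at this; omega)

theorem isPref_JP (Δ : ℕ → A) (n : ℕ) : IsPref (JP (prefWord Δ n)) (std Δ) := by
  intro i hi
  have hl := JP_length_le (prefWord Δ (i + 1))
  rw [prefWord_length] at hl
  have h : ∀ l l' : List A, l <+: l' → ∀ (h : i < l.length) (h' : i < l'.length),
      l[i] = l'[i] := by
    rintro l _ ⟨r, rfl⟩ h h'
    rw [List.getElem_append_left h]
  rcases le_total n (i + 1) with hn | hn
  · exact h _ _ (JP_prefix (prefWord_mono Δ hn)) _ _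
  · exact (h _ _ (JP_prefix (prefWord_mono Δ hn)) _ _).symm

theorem IsPref.prefix_JP {Δ : ℕ → A} {u : List A} (h : IsPref u (std Δ)) :
    u <+: JP (prefWord Δ u.length) := by
  refine h.prefix_of_le (isPref_JP Δ _) ?_
  have := JP_length_le (prefWord Δ u.length)
  rwa [prefWord_length] at this

/-- `std Δ = L_a(std Δ')` where `Δ = a Δ'`, in terms of prefixes. -/
theorem isPref_std_iff {Δ : ℕ → A} {X : List A} :
    IsPref X (std Δ) ↔
      ∃ z, IsPref z (std fun i => Δ (i + 1)) ∧ X <+: Lm (Δ 0) z ++ [Δ 0] := by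
  constructor
  · intro h
    refine ⟨_, isPref_JP _ X.length, ?_⟩
    have h1 : X <+: JP (prefWord Δ (X.length + 1)) :=
      h.prefix_JP.trans (JP_prefix (prefWord_mono Δ (Nat.le_succ _)))
    rwa [prefWord_succ_left, JP_cons] at h1
  · rintro ⟨z, hz, hX⟩
    refine IsPref.of_prefix (hX.trans (Lm_prefix_mono _ hz.prefix_JP)) ?_
    rw [← JP_cons, ← prefWord_succ_left]
    exact isPref_JP _ _

/-- `P(v)` occurs in `μ_v(w)` at the position of each image `μ_v(b)` of a letter of `w`. -/
theorem isPref_muL {Δ : ℕ → A} (n : ℕ) {z : List A} (hz : IsPref z (std fun i => Δ (i + n))) :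
    IsPref (muL (prefWord Δ n) z ++ JP (prefWord Δ n)) (std Δ) := by
  induction n generalizing Δ with
  | zero => simpa [prefWord, muL, JP] using hz
  | succ n ih =>
    have h := ih (Δ := fun i => Δ (i + 1)) hz
    rw [isPref_std_iff]
    refine ⟨_, h, ?_⟩
    rw [prefWord_succ_left, muL_cons, JP_cons, Lm_append, List.append_assoc]

/-- A factor `q` of `P(v)`, `v = x₁⋯x_{n+1}`, which is not a factor of `P(x₁⋯x_n)` occurs in the
epistandard word only inside the occurrences of `P(v)` described by `isPref_muL`, and always at
the same offset `|α|`. -/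
theorem occ_unique {Δ : ℕ → A} (n : ℕ) {q : List A} (h1 : q <:+: JP (prefWord Δ (n + 1)))
    (h2 : ¬ q <:+: JP (prefWord Δ n)) :
    ∃ α : List A, ∀ x, IsPref (x ++ q) (std Δ) →
      ∃ z, IsPref z (std fun i => Δ (i + (n + 1))) ∧ x = muL (prefWord Δ (n + 1)) z ++ α := by
  have hq : q ≠ [] := fun h => h2 (by rw [h]; exact List.nil_infix)
  induction n generalizing Δ q with
  | zero =>
    have hq1 : q = [Δ 0] := by
      have hl := h1.length_le
      obtain ⟨a, b, hab⟩ := h1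
      have h0 : JP (prefWord Δ (0 + 1)) = [Δ 0] := by simp [prefWord, JP, Lm_nil]
      rw [h0] at hab hl
      rcases q with _ | ⟨c, q⟩
      · exact absurd rfl hq
      · have hq0 : q = [] := by simpa using hl
        subst hq0
        have : c ∈ [Δ 0] := by rw [← hab]; simp
        simpa using this
    subst hq1
    refine ⟨[], fun x hx => ?_⟩
    obtain ⟨z, hz, hX⟩ := isPref_std_iff.1 hx
    obtain ⟨y, hy, rfl⟩ := Lm_prefix_self hX
    exact ⟨y, hz.of_prefix hy, by simp [prefWord, muL]⟩
  | succ n ih =>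
    set Δ' : ℕ → A := fun i => Δ (i + 1) with hΔ'
    set a := Δ 0 with ha
    -- `e₁ q e₂ = L_a(q') a`, and the induction hypothesis applies to `q'`
    obtain ⟨e₁, e₂, hs, he, hext⟩ := Lm_extend a hq
    rw [prefWord_succ_left, JP_cons, ← ha, ← hΔ'] at h1
    obtain ⟨x₀, r₀, hx₀⟩ := h1
    obtain ⟨y₀, -, hy₀⟩ := hext x₀ _ ⟨r₀, hx₀⟩
    obtain ⟨x', q', -, hq', hx'⟩ := Lm_desub hy₀ hs he
    have h1' : q' <:+: JP (prefWord Δ' (n + 1)) := by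
      obtain ⟨r, hr⟩ := hx'
      exact ⟨x', r, hr⟩
    have h2' : ¬ q' <:+: JP (prefWord Δ' n) := by
      rintro ⟨u, r, hur⟩
      apply h2
      rw [prefWord_succ_left, JP_cons, ← ha, ← hΔ', ← hur]
      obtain ⟨r', hr'⟩ := Lm_head a r
      refine ⟨Lm a u ++ e₁, e₂ ++ r', ?_⟩
      have : Lm a u ++ e₁ ++ q ++ (e₂ ++ r') = Lm a u ++ (e₁ ++ q ++ e₂) ++ r' := by simp
      rw [this, hq', Lm_append, Lm_append, List.append_assoc _ _ [a], hr']
      simp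
    have hq'0 : q' ≠ [] := fun h => h2' (by rw [h]; exact List.nil_infix)
    obtain ⟨α, hα⟩ := ih h1' h2' hq'0
    refine ⟨Lm a α ++ e₁, fun x hx => ?_⟩
    obtain ⟨z, hz, hX⟩ := isPref_std_iff.1 hx
    obtain ⟨y, rfl, hy⟩ := hext x z hX
    obtain ⟨y', q'', rfl, hq'', hy'⟩ := Lm_desub hy hs he
    have hqq : q' = q'' := by
      rw [hq'] at hq''
      exact Lm_injective a (List.append_cancel_right hq'')
    subst hqq
    obtain ⟨z', hz', rfl⟩ := hα y' (hz.of_prefix hy')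
    refine ⟨z', hz', ?_⟩
    rw [prefWord_succ_left Δ, muL_cons, Lm_append, List.append_assoc]

/-- Every occurrence of a factor of an epistandard word can be found arbitrarily far. -/
theorem std_recurrent {Δ : ℕ → A} {u : List A} {k : ℕ} (h : OccursAt u (std Δ) k) (K : ℕ) :
    ∃ k', K ≤ k' ∧ OccursAt u (std Δ) k' := by
  rw [occursAt_iff] at h
  -- every prefix of `std Δ` is a prefix of some `P(v)`, which recurs by `isPref_muL`
  set N := (prefWord (std Δ) k ++ u).length
  have hz := isPref_prefWord (std fun i => Δ (i + N)) K
  have h1 := isPref_muL N hz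
  have h2 : IsPref ((muL (prefWord Δ N) (prefWord (std fun i => Δ (i + N)) K) ++
      prefWord (std Δ) k) ++ u) (std Δ) := by
    refine h1.of_prefix ?_
    rw [List.append_assoc]
    exact (List.prefix_append_right_inj _).2 h.prefix_JP
  refine ⟨_, ?_, occursAt_of_isPref h2⟩
  have := muL_length_le (prefWord Δ N) (prefWord (std fun i => Δ (i + N)) K)
  rw [prefWord_length] at this
  rw [List.length_append]
  omega

theorem std_mem {Δ : ℕ → A} {c : A} : (∃ i, std Δ i = c) ↔ ∃ i, Δ i = c := by
  constructor
  · rintro ⟨i, rfl⟩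
    have : std Δ i ∈ JP (prefWord Δ (i + 1)) := List.getElem_mem _
    rw [mem_JP, mem_prefWord] at this
    obtain ⟨j, -, h⟩ := this
    exact ⟨j, h⟩
  · rintro ⟨i, rfl⟩
    have : Δ i ∈ JP (prefWord Δ (i + 1)) := mem_JP.2 (mem_prefWord.2 ⟨i, by omega, rfl⟩)
    rw [isPref_iff.1 (isPref_JP Δ (i + 1)), mem_prefWord] at this
    obtain ⟨j, -, h⟩ := this
    exact ⟨j, h⟩

end Infinite

/-! ### Ultimate quasiperiods as dense factors -/

section Windows

variable {A : Type*}

/-- From position `K` on, `q` occurs in `w` at some position of every window of `|q|`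
consecutive positions. -/
def Dense (q : List A) (w : ℕ → A) (K : ℕ) : Prop :=
  ∀ i, K ≤ i → ∃ j, i ≤ j ∧ j < i + q.length ∧ OccursAt q w j

theorem occursAt_shift {q : List A} {w : ℕ → A} {k j : ℕ} :
    OccursAt q (fun i => w (i + k)) j ↔ OccursAt q w (j + k) := by
  unfold OccursAt
  refine forall₂_congr fun i h => ?_
  simp only [add_right_comm j i k]

theorem IsQuasiperiod.dense {q : List A} {w : ℕ → A} {k : ℕ}
    (h : IsQuasiperiod q (fun i => w (i + k))) : Dense q w k := by
  obtain ⟨-, p, h0, hp, hpre⟩ := h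
  have hge : ∀ n, n ≤ (p n).length := by
    intro n
    induction n with
    | zero => simp
    | succ n ih => have := (hp n).1; omega
  intro i hi
  classical
  have hex : ∃ n, i ≤ (p n).length + k := ⟨i, by have := hge i; omega⟩
  have hn := Nat.find_spec hex
  have hocc := occursAt_shift.1 (occursAt_of_isPref (hpre (Nat.find hex)))
  refine ⟨_, hn, ?_, hocc⟩
  rcases hcase : Nat.find hex with _ | n
  · rw [hcase, h0] at hn
    have h1 := (hp 0)
    rw [h0] at h1 ⊢
    simp only [List.length_nil] at *
    omega
  · have hlt := Nat.find_min hex (m := n) (by omega)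
    have := (hp n).2
    omega

theorem Dense.exists_isQuasiperiod {q : List A} {w : ℕ → A} (hq : q ≠ []) (h : Dense q w 0) :
    ∃ k, IsQuasiperiod q (fun i => w (i + k)) := by
  obtain ⟨k, -, -, hk⟩ := h 0 le_rfl
  choose f hf using fun i => h (i + 1) (Nat.zero_le _)
  let g : ℕ → ℕ := fun n => f^[n] k
  have hg : ∀ n, g (n + 1) = f (g n) := fun n => Function.iterate_succ_apply' f n k
  have hk' : ∀ n, k ≤ g n := by
    intro n
    induction n with
    | zero => exact le_rfl
    | succ n ih => have := (hf (g n)).1; rw [hg]; omega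
  have hocc : ∀ n, OccursAt q w (g n) := by
    intro n
    cases n with
    | zero => exact hk
    | succ n => rw [hg]; exact (hf (g n)).2.2
  refine ⟨k, hq, fun n => prefWord (fun i => w (i + k)) (g n - k), ?_, fun n => ?_, fun n => ?_⟩
  · simp [g, prefWord]
  · simp only [prefWord_length, hg]
    have h1 := hf (g n)
    have h2 := hk' n
    omega
  · rw [← occursAt_iff, occursAt_shift, Nat.sub_add_cancel (hk' n)]
    exact hocc n

/-- Density only depends on the factors of length `2 |q|`. -/
theorem Dense.transfer {q : List A} {w w' : ℕ → A} {K : ℕ} (h : Dense q w' K)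
    (H : ∀ u k, OccursAt u w k → ∃ k', K ≤ k' ∧ OccursAt u w' k') : Dense q w 0 := by
  intro i _
  obtain ⟨k', hk', hocc⟩ := H _ i (occursAt_window w i (2 * q.length))
  obtain ⟨j, hj1, hj2, hj⟩ := h k' hk'
  refine ⟨i + (j - k'), by omega, by omega, occursAt_sub hocc (by omega) ?_⟩
  rwa [Nat.add_sub_cancel' hj1]

theorem Dense.isFactor {q : List A} {w : ℕ → A} (hd : Dense q w 0) : ∃ k, OccursAt q w k := by
  obtain ⟨j, -, -, h⟩ := hd 0 le_rfl
  exact ⟨j, h⟩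

end Windows

/-! ### Gaps between the occurrences of a factor -/

section Main

variable {A : Type*} [DecidableEq A]

/-- If `q` is a factor of `P(v)`, `v = x₁⋯x_n`, at least as long as every `μ_v(b)` with `b` in
`Alph(x_{n+1} x_{n+2} ⋯)`, then the occurrences of `q` become dense. -/
theorem dense_of_long {Δ : ℕ → A} {n : ℕ} {q : List A} (hq : q ≠ [])
    (hfac : q <:+: JP (prefWord Δ n))
    (hlen : ∀ k, n ≤ k → (muL (prefWord Δ n) [Δ k]).length ≤ q.length) :
    ∃ K, Dense q (std Δ) K := by
  obtain ⟨α, β, hαβ⟩ := hfac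
  set v := prefWord Δ n
  set y := std fun i => Δ (i + n) with hy
  have hq0 : 0 < q.length := List.length_pos_iff.2 hq
  let φ : ℕ → ℕ := fun k => (muL v (prefWord y k)).length
  have hocc : ∀ k, OccursAt q (std Δ) (φ k + α.length) := by
    intro k
    have h1 := isPref_muL n (isPref_prefWord y k)
    rw [← hαβ] at h1
    exact occursAt_append (occursAt_of_isPref h1)
  have hstep : ∀ k, φ (k + 1) ≤ φ k + q.length := by
    intro k
    obtain ⟨i, hi⟩ := (std_mem (Δ := fun i => Δ (i + n)) (c := y k)).1 ⟨k, rfl⟩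
    have := hlen (i + n) (Nat.le_add_left _ _)
    rw [hi] at this
    simp only [φ, prefWord_succ, muL_append, List.length_append]
    omega
  have hge : ∀ k, k ≤ φ k := fun k => by
    simpa [prefWord_length] using muL_length_le v (prefWord y k)
  refine ⟨α.length, fun i hi => ?_⟩
  have hex : ∃ k, i ≤ φ k + α.length := ⟨i, by have := hge i; omega⟩
  have hn := Nat.find_spec hex
  refine ⟨_, hn, ?_, hocc _⟩
  rcases hcase : Nat.find hex with _ | k
  · have : φ 0 = 0 := by simp [φ, prefWord, muL_nil]
    omega
  · have := Nat.find_min hex (m := k) (by omega)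
    have := hstep k
    omega

/-- If `q` is dense, and is a factor of `P(v)`, `v = x₁⋯x_{n+1}`, but not of `P(x₁⋯x_n)`, then `q` is
at least as long as every `μ_v(b)`, `b ∈ Alph(x_{n+2} x_{n+3} ⋯)`. -/
theorem long_of_dense {Δ : ℕ → A} {n : ℕ} {q : List A} (hd : Dense q (std Δ) 0)
    (h1 : q <:+: JP (prefWord Δ (n + 1))) (h2 : ¬ q <:+: JP (prefWord Δ n))
    {k : ℕ} (hk : n + 1 ≤ k) : (muL (prefWord Δ (n + 1)) [Δ k]).length ≤ q.length := by
  obtain ⟨α, hα⟩ := occ_unique n h1 h2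
  set v := prefWord Δ (n + 1)
  set y := std fun i => Δ (i + (n + 1)) with hy
  obtain ⟨l, hl⟩ := (std_mem (Δ := fun i => Δ (i + (n + 1))) (c := Δ k)).2
    ⟨k - (n + 1), by congr 1; omega⟩
  let φ : ℕ → ℕ := fun i => (muL v (prefWord y i)).length
  have hmono : Monotone φ := by
    refine monotone_nat_of_le_succ fun i => ?_
    simp only [φ, prefWord_succ, muL_append, List.length_append]
    omega
  -- this window starts just after offset `|α|` in the block of index `l`, whose length is `|μ_v(x_k)|`
  obtain ⟨j, hj1, hj2, hj⟩ := hd (φ l + α.length + 1) (Nat.zero_le _)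
  obtain ⟨z, hz, hx⟩ := hα _ (occursAt_iff.1 hj)
  have hjl : j = φ z.length + α.length := by
    have := congrArg List.length hx
    rw [prefWord_length, List.length_append] at this
    rw [this]
    simp only [φ]
    rw [← isPref_iff.1 hz]
  have hzl : l + 1 ≤ z.length := by
    by_contra hlt
    have := hmono (show z.length ≤ l by omega)
    omega
  have h3 := hmono hzl
  have h4 : φ (l + 1) = φ l + (muL v [Δ k]).length := by
    simp only [φ, prefWord_succ, muL_append, List.length_append]
    rw [← hl]
  omega

/-- A dense factor contains every letter of the word. -/
theorem Dense.mem {Δ : ℕ → A} {q : List A} (hd : Dense q (std Δ) 0) {c : A}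
    (hc : ∃ i, std Δ i = c) : c ∈ q := by
  obtain ⟨i, hi⟩ := hc
  have h0 : OccursAt [c] (std Δ) i := by
    intro j hj
    have hj0 : j = 0 := by simpa using hj
    subst hj0
    simpa using hi.symm
  obtain ⟨k, hk, hck⟩ := std_recurrent h0 q.length
  have hc' : c = std Δ k := by simpa using hck 0 (by simp)
  obtain ⟨j, hj1, hj2, hj⟩ := hd (k + 1 - q.length) (Nat.zero_le _)
  have := hj (k - j) (by omega)
  have e : j + (k - j) = k := by omega
  rw [e, ← hc'] at this
  rw [← this]
  exact List.get_mem _ _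

/-- `muL_length_last` for `v = x₁⋯x_n` and the letter of (zero-based) index `j`, when it does not
occur again before index `n`. -/
theorem muL_length_at {Δ : ℕ → A} {n j : ℕ} (hj : j < n)
    (h : Δ j ∉ (prefWord Δ n).drop (j + 1)) :
    (muL (prefWord Δ n) [Δ j]).length + (JP (prefWord Δ j)).length
      = (JP (prefWord Δ n)).length := by
  have hv : prefWord Δ n = prefWord Δ j ++ Δ j :: (prefWord Δ n).drop (j + 1) := by
    conv_lhs => rw [← List.take_append_drop (j + 1) (prefWord Δ n)]
    rw [prefWord_take Δ (by omega : j + 1 ≤ n), prefWord_succ]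
    simp
  have := muL_length_last (v₁ := prefWord Δ j) h
  rwa [← hv] at this

/-- The letter of index `i < n` has a last occurrence before index `n`. -/
theorem exists_last_index {Δ : ℕ → A} {n i : ℕ} (hi : i < n) :
    ∃ j, i ≤ j ∧ j < n ∧ Δ j = Δ i ∧ Δ j ∉ (prefWord Δ n).drop (j + 1) := by
  let P : ℕ → Prop := fun j => Δ j = Δ i
  have hP : P i := rfl
  have hle := Nat.le_findGreatest (P := P) (show i ≤ n - 1 by omega) hP
  have hsp := Nat.findGreatest_spec (P := P) (show i ≤ n - 1 by omega) hP
  have hub := Nat.findGreatest_le (P := P) (n - 1)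
  refine ⟨Nat.findGreatest P (n - 1), hle, by omega, hsp, fun hmem => ?_⟩
  obtain ⟨l, hl1, hl2, hl⟩ := mem_prefWord_drop.1 hmem
  exact Nat.findGreatest_is_greatest (P := P) (show Nat.findGreatest P (n - 1) < l by omega)
    (by omega) (hl.trans hsp)

end Main

/-! ### The ultimate quasiperiods -/

/-- description of the set of all ultimate quasiperiods of an
episturmian word `t` with the same set of factors as the epistandard word `s`
directed by `Δ = x₁x₂x₃⋯`.  Here `u_{n+1} = Pal(x₁⋯x_n) = Pal (prefWord Δ n)`
(so `u_{p} = Pal (prefWord Δ (p-1))`), and, for `1 ≤ i ≤ n`, the condition defining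
`p_n` reads `Alph(x_i⋯x_n) = Alph(x_i x_{i+1} ⋯)`. -/
theorem episturmian_ultimate_quasiperiods
    {A : Type*} [Fintype A] [DecidableEq A]
    (Δ : ℕ → A) (s : ℕ → A) (hs : IsEpistandardOf Δ s)
    (m : ℕ) (hm : 0 < m)
    (hAlph : ∀ a : A, a ∈ prefWord Δ m ↔ ∃ i, s i = a)
    (hmin : ∀ m', 0 < m' → (∀ a : A, a ∈ prefWord Δ m' ↔ ∃ i, s i = a) → m ≤ m')
    (t : ℕ → A) (htepi : Episturmian t)
    (hfac : ∀ u : List A, IsFactorInf u t ↔ IsFactorInf u s) :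
    ∀ q : List A,
      (∃ k : ℕ, IsQuasiperiod q (fun i => t (i + k))) ↔
      ∃ n, m ≤ n ∧ ∃ pn, 1 ≤ pn ∧ pn ≤ n ∧
        (∀ b : A, b ∈ (prefWord Δ n).drop (pn - 1) ↔ ∃ k, pn - 1 ≤ k ∧ Δ k = b) ∧
        (∀ i, pn < i → i ≤ n →
          ¬ (∀ b : A, b ∈ (prefWord Δ n).drop (i - 1) ↔ ∃ k, i - 1 ≤ k ∧ Δ k = b)) ∧
        q <:+: Pal (prefWord Δ n) ∧
        (Pal (prefWord Δ n)).length - (Pal (prefWord Δ (pn - 1))).length ≤ q.length := by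
  have hs' : s = std Δ := by
    funext i
    have hl := JP_length_le (prefWord Δ (i + 1))
    rw [prefWord_length] at hl
    have h1 := hs (i + 1)
    rw [Pal_eq_JP] at h1
    rw [← h1 i (by omega), ← isPref_JP Δ (i + 1) i (by omega)]
  subst hs'
  obtain ⟨Δt, ts, rfl, hrec, -⟩ := htepi
  intro q
  simp only [Pal_eq_JP]
  have hL : (∃ k : ℕ, IsQuasiperiod q (fun i => ts 0 (i + k))) ↔
      q ≠ [] ∧ Dense q (std Δ) 0 := by
    constructor
    · rintro ⟨k, hk⟩
      refine ⟨hk.1, hk.dense.transfer fun u i hu => ?_⟩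
      obtain ⟨i', hi'⟩ := (hfac u).2 ⟨i, hu⟩
      exact hrec 0 u i' hi' k
    · rintro ⟨hq, hd⟩
      refine Dense.exists_isQuasiperiod hq (hd.transfer fun u i hu => ?_)
      obtain ⟨i', hi'⟩ := (hfac u).1 ⟨i, hu⟩
      exact ⟨i', Nat.zero_le _, hi'⟩
  rw [hL]
  have hAlph' : ∀ i, ∃ j, j < m ∧ Δ j = Δ i := fun i =>
    mem_prefWord.1 ((hAlph _).2 (std_mem.2 ⟨i, rfl⟩))
  constructor
  · rintro ⟨hq, hd⟩
    classical
    have hex : ∃ n, q <:+: JP (prefWord Δ n) := by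
      obtain ⟨k, hk⟩ := hd.isFactor
      obtain ⟨r, hr⟩ := (occursAt_iff.1 hk).prefix_JP
      exact ⟨_, _, r, hr⟩
    obtain ⟨n, hn, hnq⟩ : ∃ n, q <:+: JP (prefWord Δ (n + 1)) ∧ ¬ q <:+: JP (prefWord Δ n) := by
      have hsp := Nat.find_spec hex
      rcases hcase : Nat.find hex with _ | n
      · rw [hcase] at hsp
        exact absurd (List.infix_nil.1 hsp) hq
      · rw [hcase] at hsp
        exact ⟨n, hsp, Nat.find_min hex (by omega)⟩
    -- `q` contains every letter of `s`, hence so does `x₁⋯x_{n+1}`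
    have hmn : m ≤ n + 1 := by
      refine hmin _ (Nat.succ_pos _) fun a => ⟨fun ha => ?_, fun ha => ?_⟩
      · obtain ⟨i, -, hi⟩ := mem_prefWord.1 ha
        exact std_mem.2 ⟨i, hi⟩
      · exact mem_JP.1 (hn.subset (hd.mem ha))
    -- with zero-based indices, `C i` is the condition on `i + 1` defining `p_{n+1}`
    let C : ℕ → Prop := fun i =>
      ∀ b : A, b ∈ (prefWord Δ (n + 1)).drop i ↔ ∃ k, i ≤ k ∧ Δ k = b
    have hC0 : C 0 := by
      intro b
      rw [List.drop_zero, mem_prefWord]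
      constructor
      · rintro ⟨i, -, h⟩; exact ⟨i, Nat.zero_le _, h⟩
      · rintro ⟨i, -, rfl⟩
        obtain ⟨j, hj, h⟩ := hAlph' i
        exact ⟨j, by omega, h⟩
    set p := Nat.findGreatest C n with hp
    have hpC : C p := Nat.findGreatest_spec (P := C) (Nat.zero_le n) hC0
    have hpn : p ≤ n := Nat.findGreatest_le n
    have hmax : ∀ i, p < i → i ≤ n → ¬ C i := fun i h1 h2 =>
      Nat.findGreatest_is_greatest h1 h2
    refine ⟨n + 1, hmn, p + 1, by omega, by omega, hpC, ?_, hn, ?_⟩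
    · intro i h1 h2
      exact hmax (i - 1) (by omega) (by omega)
    -- by maximality, the letter of index `p` does not occur between `p` and `n`, but does later
    have hlast : Δ p ∉ (prefWord Δ (n + 1)).drop (p + 1) ∧ ∃ k, p + 1 ≤ k ∧ Δ k = Δ p := by
      rcases Nat.lt_or_ge p n with hlt | hge
      · have hnC := hmax (p + 1) (by omega) (by omega)
        simp only [C, not_forall] at hnC
        obtain ⟨b, hb⟩ := hnC
        have hb' : b ∉ (prefWord Δ (n + 1)).drop (p + 1) ∧ ∃ k, p + 1 ≤ k ∧ Δ k = b := by
          by_cases hmem : b ∈ (prefWord Δ (n + 1)).drop (p + 1)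
          · obtain ⟨i, h1, -, h3⟩ := mem_prefWord_drop.1 hmem
            exact absurd ⟨fun _ => ⟨i, h1, h3⟩, fun _ => hmem⟩ hb
          · refine ⟨hmem, ?_⟩
            by_contra hno
            exact hb ⟨fun h => absurd h hmem, fun h => absurd h hno⟩
        obtain ⟨hb1, k, hk, hkb⟩ := hb'
        obtain ⟨i, h1, h2, h3⟩ := mem_prefWord_drop.1 ((hpC b).2 ⟨k, by omega, hkb⟩)
        have hip : i = p := by
          by_contra hne
          exact hb1 (mem_prefWord_drop.2 ⟨i, by omega, h2, h3⟩)
        subst hip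
        rw [h3]
        exact ⟨hb1, k, hk, hkb⟩
      · have hpe : p = n := le_antisymm hpn hge
        constructor
        · intro h
          obtain ⟨i, h1, h2, -⟩ := mem_prefWord_drop.1 h
          omega
        · obtain ⟨i, h1, h2, h3⟩ :=
            mem_prefWord_drop.1 ((hpC (Δ (p + 1))).2 ⟨p + 1, by omega, rfl⟩)
          have hip : i = p := by omega
          exact ⟨p + 1, le_rfl, by rw [← h3, hip]⟩
    obtain ⟨hl1, k, hk, hkp⟩ := hlast
    have hkn : n + 1 ≤ k := by
      by_contra hlt
      exact hl1 (mem_prefWord_drop.2 ⟨k, hk, by omega, hkp⟩)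
    have h1 := long_of_dense hd hn hnq hkn
    rw [hkp] at h1
    have h2 := muL_length_at (Δ := Δ) (n := n + 1) (j := p) (by omega) hl1
    rw [Nat.add_sub_cancel]
    omega
  · rintro ⟨n, hmn, pn, hp1, hpn, hC, -, hfac', hlen⟩
    -- the last occurrence of `x_k` in `x₁⋯x_n` is not before position `p_n`
    have key : ∀ k, n ≤ k → (muL (prefWord Δ n) [Δ k]).length ≤ q.length := by
      intro k hk
      obtain ⟨i, h1, h2, h3⟩ := mem_prefWord_drop.1 ((hC (Δ k)).2 ⟨k, by omega, rfl⟩)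
      obtain ⟨j, hij, hjn, hj, hjl⟩ := exists_last_index (Δ := Δ) h2
      have h4 := muL_length_at hjn hjl
      rw [hj, h3] at h4
      have h5 := (JP_prefix (prefWord_mono Δ (h1.trans hij))).length_le
      omega
    have hq : q ≠ [] := by
      rintro rfl
      have h1 := key n le_rfl
      have h2 := muL_length_le (prefWord Δ n) [Δ n]
      simp only [List.length_nil, List.length_cons] at h1 h2
      omega
    obtain ⟨K, hK⟩ := dense_of_long hq hfac' key
    exact ⟨hq, hK.transfer fun u k hu => std_recurrent hu K⟩

end EpiQP
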